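/- arXiv:2101.00946 — 7 statements merged into one kernel-verified Lean document; each statement's English description precedes it below -/
import Mathlib

section
/- Assume A·(1,a)ᵀ = λ·(1,a)ᵀ. Define g_A : ℝ³ → ℝ³ by g_A(x,y,t) = (a₁₁x + a₁₂y, a₂₁x + a₂₂y, t+1). Then for every s ∈ ℝ and every p ∈ ℝ³, φ_s(g_A(p)) = g_A(φ_s(p)); that is, the flow φ commutes with the deck transformation g_A of the hyperbolic torus. -/
/-- The flow `φ_s(x,y,t) = (x + s·λᵗ, y + a·s·λᵗ, t)` on `ℝ³`. -/
noncomputable def phi (lam a : ℝ) (s : ℝ) (p : ℝ × ℝ × ℝ) : ℝ × ℝ × ℝ :=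
  (p.1 + s * lam ^ p.2.2, p.2.1 + a * s * lam ^ p.2.2, p.2.2)

/-- The deck transformation `g_A(x,y,t) = (a₁₁x + a₁₂y, a₂₁x + a₂₂y, t+1)` of the
hyperbolic torus. -/
def deckA (A : Matrix (Fin 2) (Fin 2) ℤ) (p : ℝ × ℝ × ℝ) : ℝ × ℝ × ℝ :=
  ((A 0 0 : ℝ) * p.1 + (A 0 1 : ℝ) * p.2.1,
   (A 1 0 : ℝ) * p.1 + (A 1 1 : ℝ) * p.2.1, p.2.2 + 1)

/-- If `A·(1,a)ᵀ = λ·(1,a)ᵀ`, then the flow `φ` commutes with the deck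
transformation `g_A` of the hyperbolic torus: `φ_s(g_A(p)) = g_A(φ_s(p))` for all `s, p`. -/
theorem stmt3 (A : Matrix (Fin 2) (Fin 2) ℤ) (hdet : A.det = 1)
    (lam a : ℝ) (hlam : 1 < lam)
    (heig : (A.map (fun n : ℤ => (n : ℝ))).mulVec ![1, a] = lam • ![1, a]) :
    ∀ (s : ℝ) (p : ℝ × ℝ × ℝ), phi lam a s (deckA A p) = deckA A (phi lam a s p) := by
  have h0 := congrFun heig 0
  have h1 := congrFun heig 1
  simp [Matrix.mulVec, dotProduct, Fin.sum_univ_two] at h0 h1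
  rintro s ⟨x, y, t⟩
  have hp : lam ^ (t + 1) = lam ^ t * lam := by
    rw [Real.rpow_add (by linarith), Real.rpow_one]
  simp only [phi, deckA, hp, Prod.mk.injEq, and_true]
  constructor
  · linear_combination (-s * lam ^ t) * h0
  · linear_combination (-s * lam ^ t) * h1
end

section
/- Let f : ℝ³ → ℝ be a smooth function such that Zf is bounded (i.e. sup_{p∈ℝ³} |Zf(p)| < ∞) and f ∘ γ = f. Then Xf = 0 identically. -/
/-- The vector field `X = λᵗ(∂/∂x + a ∂/∂y)` acting on functions. -/
noncomputable def Xop (lam a : ℝ) (f : ℝ × ℝ × ℝ → ℝ) (p : ℝ × ℝ × ℝ) : ℝ :=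
  lam ^ p.2.2 * (deriv (fun x => f (x, p.2.1, p.2.2)) p.1
    + a * deriv (fun y => f (p.1, y, p.2.2)) p.2.1)

/-- The vector field `Z = -(log λ)⁻¹ ∂/∂t` acting on functions. -/
noncomputable def Zop (lam : ℝ) (f : ℝ × ℝ × ℝ → ℝ) (p : ℝ × ℝ × ℝ) : ℝ :=
  -(Real.log lam)⁻¹ * deriv (fun t => f (p.1, p.2.1, t)) p.2.2

theorem aux_iter (lam a : ℝ) (f : ℝ × ℝ × ℝ → ℝ) (hinv : f ∘ phi lam a 1 = f)
    (n : ℕ) (x y t : ℝ) :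
    f (x + n * lam ^ t, y + a * (n * lam ^ t), t) = f (x, y, t) := by
  induction n with
  | zero => simp
  | succ k ih =>
    rw [← ih]
    have h := congrFun hinv (x + k * lam ^ t, y + a * (k * lam ^ t), t)
    rw [← h]
    simp only [Function.comp, phi]
    congr 2
    · push_cast; ring
    · congr 1
      push_cast; ring

theorem aux_lip (lam : ℝ) (hlam : 1 < lam) (f : ℝ × ℝ × ℝ → ℝ) (hf : Differentiable ℝ f)
    (hZ : ∃ C : ℝ, ∀ p : ℝ × ℝ × ℝ, |Zop lam f p| ≤ C) :
    ∃ K : ℝ, ∀ x y t t' : ℝ, |f (x, y, t) - f (x, y, t')| ≤ K * |t - t'| := by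
  obtain ⟨C, hC⟩ := hZ
  have hl : 0 < Real.log lam := Real.log_pos hlam
  refine ⟨Real.log lam * C, fun x y t t' => ?_⟩
  have hd : Differentiable ℝ (fun s : ℝ => f (x, y, s)) :=
    hf.comp (by fun_prop : Differentiable ℝ (fun s : ℝ => ((x, y, s) : ℝ × ℝ × ℝ)))
  have := Convex.norm_image_sub_le_of_norm_deriv_le (f := fun s : ℝ => f (x, y, s))
    (s := Set.univ) (C := Real.log lam * C) (x := t') (y := t)
    (fun s _ => hd s) (fun s _ => ?_) convex_univ (Set.mem_univ _) (Set.mem_univ _)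
  · simpa [Real.norm_eq_abs] using this
  · have h := hC (x, y, s)
    simp only [Zop] at h
    rw [abs_mul, abs_neg, abs_of_pos (inv_pos.2 hl), inv_mul_le_iff₀ hl] at h
    exact h

theorem aux_inv (lam a : ℝ) (hlam : 1 < lam) (f : ℝ × ℝ × ℝ → ℝ) (K : ℝ)
    (hK : ∀ x y t t' : ℝ, |f (x, y, t) - f (x, y, t')| ≤ K * |t - t'|)
    (hinv : f ∘ phi lam a 1 = f) (x y t w : ℝ) (hw : 0 ≤ w) :
    f (x + w, y + a * w, t) = f (x, y, t) := by
  have h0 : 0 < lam := by linarith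
  have hp : 0 < lam ^ t := Real.rpow_pos_of_pos h0 t
  let T : ℕ → ℝ := fun n => Real.logb lam (lam ^ t + w / ((n : ℝ) + 1))
  have hT : Filter.Tendsto T Filter.atTop (nhds t) := by
    have h1 : Filter.Tendsto (fun n : ℕ => lam ^ t + w / ((n : ℝ) + 1)) Filter.atTop
        (nhds (lam ^ t)) := by
      have := (tendsto_one_div_add_atTop_nhds_zero_nat (𝕜 := ℝ)).const_mul w
      have := this.const_add (lam ^ t)
      simpa [div_eq_mul_inv] using this
    have h2 := (h1.log hp.ne').div_const (Real.log lam)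
    have h3 : Real.log (lam ^ t) / Real.log lam = t := Real.logb_rpow h0 hlam.ne'
    rw [h3] at h2
    exact h2
  have hb : ∀ n : ℕ, |f (x + w, y + a * w, t) - f (x, y, t)| ≤ 2 * K * |T n - t| := by
    intro n
    have hn : (0 : ℝ) < (n : ℝ) + 1 := by positivity
    have hTn : lam ^ (T n) = lam ^ t + w / ((n : ℝ) + 1) :=
      Real.rpow_logb h0 hlam.ne' (by positivity)
    have e1 := aux_iter lam a f hinv (n + 1) (x + w) (y + a * w) t
    have e2 := aux_iter lam a f hinv (n + 1) x y (T n)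
    have k1 : x + ((n + 1 : ℕ) : ℝ) * lam ^ (T n) = x + w + ((n + 1 : ℕ) : ℝ) * lam ^ t := by
      rw [hTn]; push_cast; field_simp; ring
    have k2 : y + a * (((n + 1 : ℕ) : ℝ) * lam ^ (T n))
        = y + a * w + a * (((n + 1 : ℕ) : ℝ) * lam ^ t) := by
      rw [hTn]; push_cast; field_simp; ring
    rw [k1, k2] at e2
    rw [← e1]
    have b1 := hK (x + w + ((n + 1 : ℕ) : ℝ) * lam ^ t)
      (y + a * w + a * (((n + 1 : ℕ) : ℝ) * lam ^ t)) (T n) t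
    have b2 := hK x y (T n) t
    rw [e2] at b1
    rw [abs_le] at *
    constructor <;> linarith [b1.1, b1.2, b2.1, b2.2]
  have hlim : Filter.Tendsto (fun n => 2 * K * |T n - t|) Filter.atTop (nhds 0) := by
    have := ((hT.sub_const t).abs).const_mul (2 * K)
    simpa using this
  have := ge_of_tendsto' hlim hb
  exact sub_eq_zero.1 (abs_nonpos_iff.1 this)

/-- Let `f : ℝ³ → ℝ` be smooth with `Zf` bounded and `f ∘ γ = f`,
where `γ = φ₁`. Then `Xf = 0` identically. -/
theorem stmt5 (lam a : ℝ) (hlam : 1 < lam)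
    (f : ℝ × ℝ × ℝ → ℝ) (hf : ContDiff ℝ (⊤ : ℕ∞) f)
    (hZ : ∃ C : ℝ, ∀ p : ℝ × ℝ × ℝ, |Zop lam f p| ≤ C)
    (hinv : f ∘ phi lam a 1 = f) :
    ∀ p : ℝ × ℝ × ℝ, Xop lam a f p = 0 := by
  have hd : Differentiable ℝ f := hf.differentiable (by simp)
  obtain ⟨K, hK⟩ := aux_lip lam hlam f hd hZ
  rintro ⟨x, y, t⟩
  have hconst : ∀ w : ℝ, f (x + w, y + a * w, t) = f (x, y, t) := by
    intro w
    rcases le_total 0 w with hw | hw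
    · exact aux_inv lam a hlam f K hK hinv x y t w hw
    · have := aux_inv lam a hlam f K hK hinv (x + w) (y + a * w) t (-w) (by linarith)
      rw [← this]
      congr 2
      · ring
      · congr 1; ring
  have hF := (hd (x, y, t)).hasFDerivAt
  have h1 : HasDerivAt (fun s : ℝ => f (s, y, t)) (fderiv ℝ f (x, y, t) (1, 0, 0)) x := by
    have hc : HasDerivAt (fun s : ℝ => ((s, y, t) : ℝ × ℝ × ℝ)) (1, 0, 0) x :=
      (hasDerivAt_id x).prodMk (hasDerivAt_const x (y, t))
    exact HasFDerivAt.comp_hasDerivAt x hF hc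
  have h2 : HasDerivAt (fun s : ℝ => f (x, s, t)) (fderiv ℝ f (x, y, t) (0, 1, 0)) y := by
    have hc : HasDerivAt (fun s : ℝ => ((x, s, t) : ℝ × ℝ × ℝ)) (0, 1, 0) y :=
      (hasDerivAt_const y x).prodMk ((hasDerivAt_id y).prodMk (hasDerivAt_const y t))
    exact HasFDerivAt.comp_hasDerivAt y hF hc
  have h3 : HasDerivAt (fun w : ℝ => f (x + w, y + a * w, t))
      (fderiv ℝ f (x, y, t) (1, a, 0)) 0 := by
    have hc : HasDerivAt (fun w : ℝ => ((x + w, y + a * w, t) : ℝ × ℝ × ℝ)) (1, a, 0) 0 := by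
      have c1 : HasDerivAt (fun w : ℝ => x + w) 1 0 := (hasDerivAt_id (0 : ℝ)).const_add x
      have c2 : HasDerivAt (fun w : ℝ => y + a * w) a 0 := by
        simpa using ((hasDerivAt_id (0 : ℝ)).const_mul a).const_add y
      exact c1.prodMk (c2.prodMk (hasDerivAt_const 0 t))
    have hF' : HasFDerivAt f (fderiv ℝ f (x, y, t))
        ((fun w : ℝ => ((x + w, y + a * w, t) : ℝ × ℝ × ℝ)) 0) := by simpa using hF
    exact HasFDerivAt.comp_hasDerivAt 0 hF' hc
  have h4 : fderiv ℝ f (x, y, t) (1, a, 0) = 0 := by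
    rw [funext hconst] at h3
    exact h3.unique (hasDerivAt_const _ _)
  have h5 : ((1, a, 0) : ℝ × ℝ × ℝ) = (1, 0, 0) + a • (0, 1, 0) := by simp
  rw [h5, map_add, map_smul, smul_eq_mul] at h4
  simp only [Xop]
  rw [h1.deriv, h2.deriv, h4, mul_zero]
end

section
/- Let a be an irrational real number. Then for every point p of the 2-torus (ℝ/ℤ)², the set {p + π(s, a·s) : s ∈ ℝ} is dense in (ℝ/ℤ)², where π : ℝ² → (ℝ/ℤ)² is the canonical projection; i.e. every orbit of the linear flow of slope a on the 2-torus is dense. -/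
/-- Let `a` be irrational. Then for every point `p` of the 2-torus
`(ℝ/ℤ)²`, the orbit `{p + π(s, a·s) : s ∈ ℝ}` of the linear flow of slope `a` is dense
in `(ℝ/ℤ)²`, where `π : ℝ² → (ℝ/ℤ)²` is the canonical projection. -/
theorem stmt6 (a : ℝ) (ha : Irrational a)
    (p : AddCircle (1 : ℝ) × AddCircle (1 : ℝ)) :
    Dense {q : AddCircle (1 : ℝ) × AddCircle (1 : ℝ) |
      ∃ s : ℝ, q = p + (((s : ℝ) : AddCircle (1 : ℝ)), ((a * s : ℝ) : AddCircle (1 : ℝ)))} := by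
  have hd : DenseRange (· • (a : AddCircle (1 : ℝ)) : ℤ → AddCircle (1 : ℝ)) :=
    AddCircle.denseRange_zsmul_coe_iff.2 (by simpa using ha)
  obtain ⟨p1, p2⟩ := p
  rintro ⟨x, y⟩
  obtain ⟨t, ht⟩ := QuotientAddGroup.mk_surjective (x - p1)
  have ht' : ((t : ℝ) : AddCircle (1 : ℝ)) = x - p1 := ht
  let g : AddCircle (1 : ℝ) → AddCircle (1 : ℝ) × AddCircle (1 : ℝ) :=
    fun z => (x, p2 + ((a * t : ℝ) : AddCircle (1 : ℝ)) + z)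
  have hg : Continuous g := by fun_prop
  have h := map_mem_closure hg (hd (y - (p2 + ((a * t : ℝ) : AddCircle (1 : ℝ)))))
    (t := {q : AddCircle (1 : ℝ) × AddCircle (1 : ℝ) |
      ∃ s : ℝ, q = (p1, p2) +
        (((s : ℝ) : AddCircle (1 : ℝ)), ((a * s : ℝ) : AddCircle (1 : ℝ)))}) (by
      rintro _ ⟨n, rfl⟩
      refine ⟨t + n, ?_⟩
      have h1 : ((n : ℝ) : AddCircle (1 : ℝ)) = 0 :=
        (AddCircle.coe_eq_zero_iff (1 : ℝ)).2 ⟨n, by simp⟩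
      have h2 : ((a * (t + n) : ℝ) : AddCircle (1 : ℝ))
          = ((a * t : ℝ) : AddCircle (1 : ℝ)) + n • (a : AddCircle (1 : ℝ)) := by
        rw [← AddCircle.coe_zsmul, ← AddCircle.coe_add]
        congr 1
        simp only [zsmul_eq_mul]
        ring
      simp only [g, Prod.mk_add_mk, h2, AddCircle.coe_add, h1, ht']
      ext
      · simp
      · simp [add_assoc])
  simpa [g] using h
end

section
/- Let a be an irrational real number and let f : ℝ³ → ℝ be a smooth function satisfying f(x+1,y,t) = f(x,y,t), f(x,y+1,t) = f(x,y,t) for all (x,y,t), and Xf = 0 everywhere. Then f depends only on the third coordinate: f(x,y,t) = f(x',y',t) for all x, x', y, y', t ∈ ℝ. -/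
/-- Let `a` be irrational and `f : ℝ³ → ℝ` smooth, `1`-periodic in the
first two coordinates, with `Xf = 0` everywhere. Then `f` depends only on the third
coordinate. -/
theorem stmt7 (lam a : ℝ) (hlam : 1 < lam) (ha : Irrational a)
    (f : ℝ × ℝ × ℝ → ℝ) (hf : ContDiff ℝ (⊤ : ℕ∞) f)
    (hper₁ : ∀ x y t : ℝ, f (x + 1, y, t) = f (x, y, t))
    (hper₂ : ∀ x y t : ℝ, f (x, y + 1, t) = f (x, y, t))
    (hX : ∀ p : ℝ × ℝ × ℝ, Xop lam a f p = 0) :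
    ∀ x x' y y' t : ℝ, f (x, y, t) = f (x', y', t) := by
  have hd : Differentiable ℝ f := hf.differentiable (by simp)
  have hc : Continuous f := hd.continuous
  have hinv : ∀ x y t s : ℝ, f (x + s, y + a * s, t) = f (x, y, t) := by
    intro x y t s
    have key : ∀ s : ℝ, HasDerivAt (fun s : ℝ => f (x + s, y + a * s, t)) 0 s := by
      intro s
      have hF := (hd (x + s, y + a * s, t)).hasFDerivAt
      set L := fderiv ℝ f (x + s, y + a * s, t) with hL
      have h1 : HasDerivAt (fun u : ℝ => f (u, y + a * s, t)) (L (1, 0, 0)) (x + s) :=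
        hF.comp_hasDerivAt (x + s)
          ((hasDerivAt_id (x + s)).prodMk
            ((hasDerivAt_const (x + s) (y + a * s)).prodMk (hasDerivAt_const (x + s) t)))
      have h2 : HasDerivAt (fun u : ℝ => f (x + s, u, t)) (L (0, 1, 0)) (y + a * s) :=
        hF.comp_hasDerivAt (y + a * s)
          ((hasDerivAt_const (y + a * s) (x + s)).prodMk
            ((hasDerivAt_id (y + a * s)).prodMk (hasDerivAt_const (y + a * s) t)))
      have e1 : HasDerivAt (fun u : ℝ => x + u) 1 s := (hasDerivAt_id s).const_add x
      have e2 : HasDerivAt (fun u : ℝ => y + a * u) a s := by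
        simpa using ((hasDerivAt_id s).const_mul a).const_add y
      have h3 : HasDerivAt (fun u : ℝ => f (x + u, y + a * u, t)) (L (1, a, 0)) s :=
        hF.comp_hasDerivAt s (e1.prodMk (e2.prodMk (hasDerivAt_const s t)))
      have hx := hX (x + s, y + a * s, t)
      simp only [Xop, h1.deriv, h2.deriv] at hx
      have hpos : lam ^ t ≠ 0 := (Real.rpow_pos_of_pos (by linarith) t).ne'
      have hz := (mul_eq_zero.mp hx).resolve_left hpos
      have hsplit : ((1, a, 0) : ℝ × ℝ × ℝ) = (1, 0, 0) + a • (0, 1, 0) := by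
        simp
      have : L (1, a, 0) = 0 := by
        rw [hsplit, map_add, map_smul, smul_eq_mul, hz]
      rwa [this] at h3
    have := is_const_of_deriv_eq_zero (fun s => (key s).differentiableAt)
      (fun s => (key s).deriv) s 0
    simpa using this
  have hconst : ∀ t c : ℝ, ∀ z : ℝ, f (0, z + c, t) = f (0, z, t) := by
    intro t
    let H : AddSubgroup ℝ :=
      { carrier := {c | ∀ z : ℝ, f (0, z + c, t) = f (0, z, t)}
        zero_mem' := by intro z; simp
        add_mem' := by
          intro c d hc hd z
          rw [← add_assoc, hd, hc]
        neg_mem' := by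
          intro c hc z
          have := hc (z + -c)
          rw [neg_add_cancel_right] at this
          exact this.symm }
    have hclosed : IsClosed (H : Set ℝ) := by
      have : (H : Set ℝ) = ⋂ z : ℝ, {c | f (0, z + c, t) = f (0, z, t)} := by
        ext c
        simp only [Set.mem_iInter]
        rfl
      rw [this]
      exact isClosed_iInter fun z => isClosed_eq (by fun_prop) continuous_const
    have hle : AddSubgroup.closure {a, 1} ≤ H := by
      rw [AddSubgroup.closure_le]
      rintro c (rfl | rfl)
      · intro z
        rw [← hper₁]
        have := hinv 0 z t 1
        rw [mul_one] at this
        exact this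
      · intro z
        exact hper₂ 0 z t
    have hdense : Dense (AddSubgroup.closure {a, 1} : Set ℝ) :=
      dense_addSubgroupClosure_pair_iff.mpr (by simpa using ha)
    have huniv : (H : Set ℝ) = Set.univ :=
      hclosed.closure_eq.symm.trans (hdense.mono hle).closure_eq
    intro c
    have : c ∈ (H : Set ℝ) := huniv ▸ Set.mem_univ c
    exact this
  have hzero : ∀ x y t : ℝ, f (x, y, t) = f (0, 0, t) := by
    intro x y t
    have h1 := hinv x y t (-x)
    rw [add_neg_cancel] at h1
    have h2 := hconst t (y + a * -x) 0
    rw [zero_add] at h2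
    rw [← h1, h2]
  intro x x' y y' t
  rw [hzero x y t, hzero x' y' t]
end

section
/- Let A = (a_{ij}) be a 2×2 integer matrix with det A = 1, let λ > 1 and let a be an irrational real number. If f : ℝ³ → ℝ is smooth, Γ₃-invariant, and satisfies f ∘ γ = f, then f depends only on the third coordinate: f(x,y,t) = f(x',y',t) for all x, x', y, y', t ∈ ℝ. -/
lemma aux_const (h : ℝ → ℝ) (hc : Continuous h) (b : ℝ) (hb : Irrational b)
    (h1 : ∀ x, h (x + 1) = h x) (h2 : ∀ x, h (x + b) = h x) (x y : ℝ) : h x = h y := by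
  let P : AddSubgroup ℝ :=
    { carrier := {p | ∀ x, h (x + p) = h x}
      zero_mem' := by intro x; simp
      add_mem' := by
        intro p q hp hq x
        rw [← add_assoc, hq, hp]
      neg_mem' := by
        intro p hp x
        have := hp (x + -p)
        rw [← this]; congr 1; ring }
  have hcl : IsClosed (P : Set ℝ) := by
    have : (P : Set ℝ) = ⋂ x, {p | h (x + p) = h x} := by
      ext p; simp [P]
    rw [this]
    exact isClosed_iInter fun x => isClosed_eq (by fun_prop) continuous_const
  have hd : Dense (AddSubgroup.closure {b, 1} : Set ℝ) := by
    rw [dense_addSubgroupClosure_pair_iff]; simpa using hb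
  have hle : AddSubgroup.closure {b, 1} ≤ P := by
    rw [AddSubgroup.closure_le]
    rintro z (rfl | rfl)
    · exact h2
    · exact h1
  have hu : (P : Set ℝ) = Set.univ := by
    rw [← hcl.closure_eq]; exact (hd.mono hle).closure_eq
  have : x - y ∈ (P : Set ℝ) := by rw [hu]; trivial
  have := this y
  rwa [add_sub_cancel] at this

lemma aux_dense (lam : ℝ) (hlam : 1 < lam) (S : Set ℝ)
    (hS : ∀ u v : ℝ, u < v → ∃ c ∈ S, u < c ∧ c < v) : Dense {t : ℝ | lam ^ t ∈ S} := by
  apply dense_of_exists_between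
  intro u v huv
  have h0 : 0 < lam := by linarith
  obtain ⟨c, hc, h1, h2⟩ := hS _ _ (Real.rpow_lt_rpow_of_exponent_lt hlam huv)
  have hcpos : 0 < c := (Real.rpow_pos_of_pos h0 u).trans h1
  refine ⟨Real.logb lam c, ?_, ?_, ?_⟩
  · simpa [Real.rpow_logb h0 hlam.ne' hcpos] using hc
  · exact (Real.lt_logb_iff_rpow_lt hlam hcpos).2 h1
  · exact (Real.logb_lt_iff_lt_rpow hlam hcpos).2 h2

lemma aux_eq (u v : ℝ → ℝ) (hu : Continuous u) (hv : Continuous v) (D : Set ℝ) (hD : Dense D)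
    (h : ∀ t ∈ D, u t = v t) (t : ℝ) : u t = v t :=
  congrFun (Continuous.ext_on hD hu hv h) t

/-- Let `A` be a `2×2` integer matrix with `det A = 1`, let `λ > 1` and
let `a` be irrational. If `f : ℝ³ → ℝ` is smooth, `Γ₃`-invariant, and satisfies
`f ∘ γ = f` with `γ = φ₁`, then `f` depends only on the third coordinate. -/
theorem stmt9 (A : Matrix (Fin 2) (Fin 2) ℤ) (hdet : A.det = 1)
    (lam a : ℝ) (hlam : 1 < lam) (ha : Irrational a)
    (f : ℝ × ℝ × ℝ → ℝ) (hf : ContDiff ℝ (⊤ : ℕ∞) f)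
    (hper₁ : ∀ x y t : ℝ, f (x + 1, y, t) = f (x, y, t))
    (hper₂ : ∀ x y t : ℝ, f (x, y + 1, t) = f (x, y, t))
    (hA : ∀ x y t : ℝ,
      f ((A 0 0 : ℝ) * x + (A 0 1 : ℝ) * y, (A 1 0 : ℝ) * x + (A 1 1 : ℝ) * y, t + 1)
        = f (x, y, t))
    (hinv : f ∘ phi lam a 1 = f) :
    ∀ x x' y y' t : ℝ, f (x, y, t) = f (x', y', t) := by
  have hcf : Continuous f := hf.continuous
  have hc : ∀ x y t : ℝ, f (x + lam ^ t, y + a * lam ^ t, t) = f (x, y, t) := by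
    intro x y t
    have := congrFun hinv (x, y, t)
    simpa [phi] using this
  have hcn : ∀ (n : ℕ) (x y t : ℝ),
      f (x + n * lam ^ t, y + n * (a * lam ^ t), t) = f (x, y, t) := by
    intro n
    induction n with
    | zero => intro x y t; simp
    | succ k ih =>
      intro x y t
      rw [← ih x y t, ← hc (x + k * lam ^ t)]
      congr 2
      · push_cast; ring
      · congr 1; push_cast; ring
  have hpn : ∀ (n : ℕ) (x y t : ℝ), f (x + n, y, t) = f (x, y, t) := by
    intro n
    induction n with
    | zero => intro x y t; simp
    | succ k ih =>
      intro x y t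
      rw [← ih x y t, ← hper₁ (x + k)]
      push_cast; ring_nf
  have h0 : 0 < lam := by linarith
  have hy : ∀ x y y' t : ℝ, f (x, y, t) = f (x, y', t) := by
    intro x y y'
    apply aux_eq (fun t => f (x, y, t)) (fun t => f (x, y', t)) (by fun_prop) (by fun_prop)
      _ (aux_dense lam hlam (Set.range ((↑) : ℚ → ℝ)) ?_)
    · rintro t ⟨q, hq⟩
      have hqpos : 0 < q := by
        have := Real.rpow_pos_of_pos h0 t
        rw [← hq] at this; exact_mod_cast this
      have hnum : 0 < q.num := Rat.num_pos.2 hqpos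
      obtain ⟨n, hn⟩ := Int.eq_ofNat_of_zero_le hnum.le
      have hden : (q.den : ℝ) * lam ^ t = n := by
        rw [← hq]
        have h := Rat.den_mul_eq_num q
        rw [hn] at h
        exact_mod_cast h
      have hn0 : n ≠ 0 := by intro h; rw [hn] at hnum; omega
      apply aux_const (fun y => f (x, y, t)) (by fun_prop) (a * n) (ha.mul_natCast hn0)
      · intro y; exact hper₂ x y t
      · intro y
        have := hcn q.den x y t
        rw [mul_left_comm, hden, hpn] at this
        exact this
    · intro u v huv
      obtain ⟨q, h1, h2⟩ := exists_rat_btwn huv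
      exact ⟨q, ⟨q, rfl⟩, h1, h2⟩
  have hx : ∀ x x' y t : ℝ, f (x, y, t) = f (x', y, t) := by
    intro x x' y
    apply aux_eq (fun t => f (x, y, t)) (fun t => f (x', y, t)) (by fun_prop) (by fun_prop)
      _ (aux_dense lam hlam {c | Irrational c} ?_)
    · intro t ht
      apply aux_const (fun x => f (x, y, t)) (by fun_prop) (lam ^ t) ht
      · intro x; exact hper₁ x y t
      · intro x
        have := hc x y t
        rw [hy _ _ y] at this
        exact this
    · intro u v huv
      obtain ⟨q, h1, h2⟩ := exists_irrational_btwn huv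
      exact ⟨q, h1, h2⟩
  intro x x' y y' t
  rw [hx x x', hy x' y y']
end

section
/- Let f, g : ℝ³ → ℝ be smooth bounded functions and set h := Xg - Yf. If h ∘ φ_s = h and h ∘ ψ_u = h for all s, u ∈ ℝ, then h = 0 identically. -/
/-- The flow `ψ_u(x,y,t) = (x + u·λ⁻ᵗ, y + b·u·λ⁻ᵗ, t)` of `Y = λ⁻ᵗ(∂/∂x + b ∂/∂y)`. -/
noncomputable def psi (lam b : ℝ) (u : ℝ) (p : ℝ × ℝ × ℝ) : ℝ × ℝ × ℝ :=
  (p.1 + u * lam ^ (-p.2.2), p.2.1 + b * u * lam ^ (-p.2.2), p.2.2)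

/-- The vector field `Y = λ⁻ᵗ(∂/∂x + b ∂/∂y)` acting on functions. -/
noncomputable def Yop (lam b : ℝ) (f : ℝ × ℝ × ℝ → ℝ) (p : ℝ × ℝ × ℝ) : ℝ :=
  lam ^ (-p.2.2) * (deriv (fun x => f (x, p.2.1, p.2.2)) p.1
    + b * deriv (fun y => f (p.1, y, p.2.2)) p.2.1)

/-- The double-integral estimate in flow coordinates. -/
lemma box_estimate (F G : ℝ × ℝ → ℝ) (hF : Differentiable ℝ F) (hG : Differentiable ℝ G)
    (C D c : ℝ) (hC : ∀ q, |F q| ≤ C) (hD : ∀ q, |G q| ≤ D)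
    (hc : ∀ q, fderiv ℝ G q (1, 0) - fderiv ℝ F q (0, 1) = c) : c = 0 := by
  have key : ∀ S : ℝ, 0 < S → S * |c| ≤ 2 * (C + D) := by
    intro S hS
    have hc' : ∀ q, fderiv ℝ G q (1, 0) + (-fderiv ℝ F q) (0, 1) = c := by
      intro q
      rw [← hc q]
      simp [sub_eq_add_neg]
    have H := MeasureTheory.integral2_divergence_prod_of_hasFDerivAt G (fun q => -F q)
      (fun q => fderiv ℝ G q) (fun q => -fderiv ℝ F q) 0 0 S S
      hG.continuous.continuousOn hF.continuous.neg.continuousOn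
      (fun q _ => (hG q).hasFDerivAt) (fun q _ => (hF q).hasFDerivAt.neg)
      (by
        simp only [hc']
        exact continuous_const.continuousOn.integrableOn_compact
          (isCompact_uIcc.prod isCompact_uIcc))
    simp only [hc', intervalIntegral.integral_const, intervalIntegral.integral_neg,
      smul_eq_mul, sub_zero] at H
    have bF : ∀ u : ℝ, |∫ x in (0:ℝ)..S, F (x, u)| ≤ C * S := by
      intro u
      have := intervalIntegral.norm_integral_le_of_norm_le_const (a := 0) (b := S)
        (f := fun x => F (x, u)) (C := C) (fun x _ => hC _)
      simpa [abs_of_pos hS] using this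
    have bG : ∀ u : ℝ, |∫ x in (0:ℝ)..S, G (u, x)| ≤ D * S := by
      intro u
      have := intervalIntegral.norm_integral_le_of_norm_le_const (a := 0) (b := S)
        (f := fun x => G (u, x)) (C := D) (fun x _ => hD _)
      simpa [abs_of_pos hS] using this
    have h1 := abs_le.1 (bF 0)
    have h2 := abs_le.1 (bF S)
    have h3 := abs_le.1 (bG 0)
    have h4 := abs_le.1 (bG S)
    have h5 : |S * (S * c)| ≤ S * (2 * (C + D)) := by
      rw [H, abs_le]
      constructor <;> linarith [h1.1, h1.2, h2.1, h2.2, h3.1, h3.2, h4.1, h4.2]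
    rw [abs_mul, abs_mul, abs_of_pos hS] at h5
    exact le_of_mul_le_mul_left h5 hS
  by_contra hne
  have hpos : 0 < |c| := abs_pos.2 hne
  have hCD : 0 ≤ C + D := add_nonneg ((abs_nonneg _).trans (hC 0)) ((abs_nonneg _).trans (hD 0))
  have := key ((2 * (C + D) + 1) / |c|) (by positivity)
  rw [div_mul_cancel₀ _ hpos.ne'] at this
  linarith

/-- The sum of partial derivatives as a directional derivative. -/
lemma partials_eq (f : ℝ × ℝ × ℝ → ℝ) (hf : Differentiable ℝ f) (p : ℝ × ℝ × ℝ) (m k : ℝ) :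
    m * (deriv (fun x => f (x, p.2.1, p.2.2)) p.1
      + k * deriv (fun y => f (p.1, y, p.2.2)) p.2.1) = fderiv ℝ f p (m, k * m, 0) := by
  have h1 : HasDerivAt (fun x => f (x, p.2.1, p.2.2)) (fderiv ℝ f p (1, 0, 0)) p.1 := by
    have hl : HasDerivAt (fun x : ℝ => ((x, p.2.1, p.2.2) : ℝ × ℝ × ℝ)) (1, 0, 0) p.1 :=
      (hasDerivAt_id p.1).prodMk (hasDerivAt_const _ _)
    exact HasFDerivAt.comp_hasDerivAt (f := fun x : ℝ => ((x, p.2.1, p.2.2) : ℝ × ℝ × ℝ))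
      p.1 (hf p).hasFDerivAt hl
  have h2 : HasDerivAt (fun y => f (p.1, y, p.2.2)) (fderiv ℝ f p (0, 1, 0)) p.2.1 := by
    have hl : HasDerivAt (fun y : ℝ => ((p.1, y, p.2.2) : ℝ × ℝ × ℝ)) (0, 1, 0) p.2.1 :=
      (hasDerivAt_const _ _).prodMk ((hasDerivAt_id p.2.1).prodMk (hasDerivAt_const _ _))
    exact HasFDerivAt.comp_hasDerivAt (f := fun y : ℝ => ((p.1, y, p.2.2) : ℝ × ℝ × ℝ))
      p.2.1 (hf p).hasFDerivAt hl
  rw [h1.deriv, h2.deriv]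
  have : ((m, k * m, 0) : ℝ × ℝ × ℝ) = m • (1, 0, 0) + (k * m) • (0, 1, 0) := by
    simp
  rw [this, map_add, map_smul, map_smul, smul_eq_mul, smul_eq_mul]
  ring

/-- Directional derivatives along an affine map, in flow coordinates. -/
lemma fderiv_affine (f : ℝ × ℝ × ℝ → ℝ) (hf : Differentiable ℝ f) (p v w : ℝ × ℝ × ℝ)
    (q d : ℝ × ℝ) :
    fderiv ℝ (fun q : ℝ × ℝ => f (p + q.1 • v + q.2 • w)) q d
      = fderiv ℝ f (p + q.1 • v + q.2 • w) (d.1 • v + d.2 • w) := by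
  have hl : HasFDerivAt (fun q : ℝ × ℝ => p + q.1 • v + q.2 • w)
      ((ContinuousLinearMap.fst ℝ ℝ ℝ).smulRight v + (ContinuousLinearMap.snd ℝ ℝ ℝ).smulRight w)
      q := by
    have h1 := ((ContinuousLinearMap.fst ℝ ℝ ℝ).smulRight v).hasFDerivAt (x := q)
    have h2 := ((ContinuousLinearMap.snd ℝ ℝ ℝ).smulRight w).hasFDerivAt (x := q)
    exact (h1.const_add p).add h2
  have := HasFDerivAt.comp q (hf _).hasFDerivAt hl
  have h3 := this.fderiv
  simp only [Function.comp_def] at h3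
  rw [h3]
  simp

/-- Let `f, g : ℝ³ → ℝ` be smooth bounded functions and set
`h := Xg - Yf`. If `h ∘ φ_s = h` and `h ∘ ψ_u = h` for all `s, u ∈ ℝ`,
then `h = 0` identically. -/
theorem stmt14 (lam a b : ℝ) (hlam : 1 < lam)
    (f g : ℝ × ℝ × ℝ → ℝ) (hf : ContDiff ℝ (⊤ : ℕ∞) f) (hg : ContDiff ℝ (⊤ : ℕ∞) g)
    (hfb : ∃ C : ℝ, ∀ p : ℝ × ℝ × ℝ, |f p| ≤ C)
    (hgb : ∃ C : ℝ, ∀ p : ℝ × ℝ × ℝ, |g p| ≤ C)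
    (h : ℝ × ℝ × ℝ → ℝ)
    (hdef : h = fun p => Xop lam a g p - Yop lam b f p)
    (hphi : ∀ s : ℝ, h ∘ phi lam a s = h)
    (hpsi : ∀ u : ℝ, h ∘ psi lam b u = h) :
    ∀ p : ℝ × ℝ × ℝ, h p = 0 := by
  obtain ⟨C, hC⟩ := hfb
  obtain ⟨D, hD⟩ := hgb
  have hfd : Differentiable ℝ f := hf.differentiable (by simp)
  have hgd : Differentiable ℝ g := hg.differentiable (by simp)
  intro p
  set m := lam ^ p.2.2 with hm
  set n := lam ^ (-p.2.2) with hn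
  set v : ℝ × ℝ × ℝ := (m, a * m, 0) with hv
  set w : ℝ × ℝ × ℝ := (n, b * n, 0) with hw
  refine box_estimate (fun q => f (p + q.1 • v + q.2 • w)) (fun q => g (p + q.1 • v + q.2 • w))
    (by fun_prop) (by fun_prop) C D (h p) (fun _ => hC _) (fun _ => hD _) ?_
  intro q
  have hq : h (p + q.1 • v + q.2 • w) = h p := by
    have e1 := congrFun (hphi q.1) p
    have e2 := congrFun (hpsi q.2) (phi lam a q.1 p)
    rw [← e1, Function.comp_apply, ← e2, Function.comp_apply]
    congr 1
    ext <;> simp [phi, psi, hv, hw, ← hm, ← hn] <;> ring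
  have ht : (p + q.1 • v + q.2 • w).2.2 = p.2.2 := by simp [hv, hw]
  rw [fderiv_affine f hfd, fderiv_affine g hgd, ← hq, hdef]
  simp only [Xop, Yop]
  rw [partials_eq g hgd, partials_eq f hfd, ht]
  simp [hv, hw, hm, hn]
end

section
/- Let ψ : ℝ → ℝ be a function and g : ℝ³ → ℝ a bounded function such that g(x,y,t) - g(γ(x,y,t)) = ψ(t) for all (x,y,t) ∈ ℝ³. Then ψ = 0 identically. (Hence no nonzero closed 1-form p*(ψ)θ pulled back from the base circle is exact in the complex of co-invariant forms, which makes the first co-invariant cohomology group of the hyperbolic torus infinite-dimensional.) -/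
/-- Let `ψ : ℝ → ℝ` and let `g : ℝ³ → ℝ` be bounded with
`g(x,y,t) - g(γ(x,y,t)) = ψ(t)` for all `(x,y,t)`, where `γ = φ₁`. Then `ψ = 0`. -/
theorem stmt17 (lam a : ℝ) (hlam : 1 < lam)
    (ψ : ℝ → ℝ) (g : ℝ × ℝ × ℝ → ℝ)
    (hg : ∃ C : ℝ, ∀ p : ℝ × ℝ × ℝ, |g p| ≤ C)
    (hco : ∀ x y t : ℝ, g (x, y, t) - g (phi lam a 1 (x, y, t)) = ψ t) :
    ∀ t : ℝ, ψ t = 0 := by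
  intro t
  obtain ⟨C, hC⟩ := hg
  have key : ∀ n : ℕ, g (0, 0, t) - g (n * lam ^ t, n * (a * lam ^ t), t) = n * ψ t := by
    intro n
    induction n with
    | zero => simp
    | succ k ih =>
      have h := hco (k * lam ^ t) (k * (a * lam ^ t)) t
      have e : phi lam a 1 (k * lam ^ t, k * (a * lam ^ t), t)
          = (((k + 1 : ℕ) : ℝ) * lam ^ t, ((k + 1 : ℕ) : ℝ) * (a * lam ^ t), t) := by
        simp only [phi, Prod.mk.injEq, and_true]
        push_cast
        constructor <;> ring
      rw [e] at h
      have hk : ((k + 1 : ℕ) : ℝ) * ψ t = k * ψ t + ψ t := by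
        push_cast
        ring
      linarith
  by_contra hne
  have hpos : 0 < |ψ t| := abs_pos.mpr hne
  obtain ⟨n, hn⟩ := exists_nat_gt (2 * C / |ψ t|)
  rw [div_lt_iff₀ hpos] at hn
  have h1 : (n : ℝ) * |ψ t| = |(n : ℝ) * ψ t| := by
    rw [abs_mul, Nat.abs_cast]
  rw [h1, ← key n] at hn
  have h2 := abs_sub (g (0, 0, t)) (g (n * lam ^ t, n * (a * lam ^ t), t))
  have h3 := hC (0, 0, t)
  have h4 := hC (n * lam ^ t, n * (a * lam ^ t), t)
  linarith
end
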